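/- Let E be a finite-dimensional real inner product space, let P ⊆ E be a nonempty finite set, let H(x) = max_{p ∈ P} ‖x − p‖, let c ∈ E be a minimizer of H over E, let r* = H(c), and let R > 0. Then for every x ∈ E with ‖x − c‖ ≤ R, H(x) − r* ≥ ‖x − c‖² / (2 r* + R). -/

import Mathlib

/-!
Each `‖· - p‖ ^ 2` is an affine function plus `‖·‖ ^ 2`, hence strongly convex with modulus
`r ↦ r ^ 2`, and so is the supremum `H ^ 2` of these functions. Strong convexity yields quadratic
growth at a minimizer `c`, namely `H c ^ 2 + ‖x - c‖ ^ 2 ≤ H x ^ 2`. It remains to factor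
`H x ^ 2 - H c ^ 2 = (H x - H c) * (H x + H c)` and to use that `H` is 1-Lipschitz.
-/

open Set Filter Topology

section UniformConvexity

variable {E : Type*} [NormedAddCommGroup E] [NormedSpace ℝ E] {s : Set E} {φ : ℝ → ℝ}

theorem uniformConvexOn_of_isLUB {ι : Type*} {I : Set ι} {f : ι → E → ℝ} {g : E → ℝ}
    (hs : Convex ℝ s) (hf : ∀ i ∈ I, UniformConvexOn s φ (f i))
    (hg : ∀ x ∈ s, IsLUB ((f · x) '' I) (g x)) : UniformConvexOn s φ g := by
  refine ⟨hs, fun x hx y hy a b ha hb hab => (hg _ (hs hx hy ha hb hab)).2 ?_⟩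
  rintro _ ⟨i, hi, rfl⟩
  have hfx : f i x ≤ g x := (hg x hx).1 (mem_image_of_mem _ hi)
  have hfy : f i y ≤ g y := (hg y hy).1 (mem_image_of_mem _ hi)
  calc
    f i (a • x + b • y) ≤ a • f i x + b • f i y - a * b * φ ‖x - y‖ :=
      (hf i hi).2 hx hy ha hb hab
    _ ≤ a • g x + b • g y - a * b * φ ‖x - y‖ := by gcongr

theorem add_modulus_le_of_isMinOn {f : E → ℝ} {c x : E} (hf : UniformConvexOn s φ f)
    (hmin : IsMinOn f s c) (hc : c ∈ s) (hx : x ∈ s) : f c + φ ‖x - c‖ ≤ f x := by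
  have near_min : ∀ t ∈ Ioo (0 : ℝ) 1, f c + (1 - t) * φ ‖x - c‖ ≤ f x := by
    rintro t ⟨ht₀, ht₁⟩
    have ht : t + (1 - t) = 1 := by ring
    have hmem : t • x + (1 - t) • c ∈ s := hf.1 hx hc ht₀.le (sub_nonneg.2 ht₁.le) ht
    have hseg : f c ≤ t * f x + (1 - t) * f c - t * (1 - t) * φ ‖x - c‖ :=
      (hmin hmem).trans (hf.2 hx hc ht₀.le (sub_nonneg.2 ht₁.le) ht)
    refine le_of_mul_le_mul_left ?_ ht₀
    linarith
  have htendsto : Tendsto (fun t : ℝ => f c + (1 - t) * φ ‖x - c‖) (𝓝[>] 0)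
      (𝓝 (f c + φ ‖x - c‖)) := by
    have hcont : Continuous fun t : ℝ => f c + (1 - t) * φ ‖x - c‖ := by fun_prop
    simpa using (hcont.tendsto 0).mono_left nhdsWithin_le_nhds
  exact le_of_tendsto htendsto (eventually_of_mem (Ioo_mem_nhdsGT one_pos) near_min)

end UniformConvexity

theorem uniformConvexOn_dist_sq {E : Type*} [NormedAddCommGroup E] [InnerProductSpace ℝ E]
    {s : Set E} (hs : Convex ℝ s) (p : E) :
    UniformConvexOn s (fun r => r ^ 2) fun x => dist x p ^ 2 := by
  have haffine : ConvexOn ℝ s fun x => ‖p‖ ^ 2 + innerSL ℝ ((-2 : ℝ) • p) x :=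
    (convexOn_const _ hs).add ((innerSL ℝ ((-2 : ℝ) • p)).toLinearMap.convexOn hs)
  have hexpand (x : E) : dist x p ^ 2 - 2 / 2 * ‖x‖ ^ 2
      = ‖p‖ ^ 2 + innerSL ℝ ((-2 : ℝ) • p) x := by
    rw [dist_eq_norm, norm_sub_sq_real, innerSL_apply_apply, real_inner_smul_left,
      real_inner_comm]
    ring
  have hstrong : StrongConvexOn s 2 fun x => dist x p ^ 2 :=
    strongConvexOn_iff_convex.2 (by simpa only [hexpand] using haffine)
  simpa only [StrongConvexOn, div_self (two_ne_zero' ℝ), one_mul] using hstrong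

/-- `H` is the farthest-distance function `x ↦ sup_{p ∈ P} dist x p` of `P`. Since `∅` has no least
upper bound in `ℝ`, this forces `P` to be nonempty and bounded. -/
def IsFarthestDist {X : Type*} [PseudoMetricSpace X] (P : Set X) (H : X → ℝ) : Prop :=
  ∀ x, IsLUB (dist x '' P) (H x)

theorem isFarthestDist_sup' {X : Type*} [PseudoMetricSpace X] {P : Finset X} (hP : P.Nonempty) :
    IsFarthestDist (P : Set X) fun x => P.sup' hP (dist x) := fun x => by
  simp only [Finset.sup'_eq_csSup_image]
  exact isLUB_csSup (hP.to_set.image _) (P.finite_toSet.image _).bddAbove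

namespace IsFarthestDist

section PseudoMetricSpace

variable {X : Type*} [PseudoMetricSpace X] {P : Set X} {H : X → ℝ}

theorem dist_le (hH : IsFarthestDist P H) (x : X) {p : X} (hp : p ∈ P) : dist x p ≤ H x :=
  (hH x).1 (mem_image_of_mem _ hp)

theorem nonneg (hH : IsFarthestDist P H) (x : X) : 0 ≤ H x := by
  obtain ⟨p, hp⟩ := (hH x).nonempty.of_image
  exact dist_nonneg.trans (hH.dist_le x hp)

theorem le_add_dist (hH : IsFarthestDist P H) (x y : X) : H x ≤ H y + dist x y := by
  refine (hH x).2 ?_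
  rintro _ ⟨p, hp, rfl⟩
  linarith [dist_triangle x y p, hH.dist_le y hp]

theorem isLUB_sq (hH : IsFarthestDist P H) (x : X) :
    IsLUB ((fun p => dist x p ^ 2) '' P) (H x ^ 2) := by
  refine ⟨?_, fun b hb => ?_⟩
  · rintro _ ⟨p, hp, rfl⟩
    exact pow_le_pow_left₀ dist_nonneg (hH.dist_le x hp) 2
  · obtain ⟨q, hq⟩ := (hH x).nonempty.of_image
    have hb₀ : 0 ≤ b := (sq_nonneg _).trans (hb (mem_image_of_mem _ hq))
    refine (Real.le_sqrt (hH.nonneg x) hb₀).1 ((hH x).2 ?_)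
    rintro _ ⟨p, hp, rfl⟩
    exact Real.le_sqrt_of_sq_le (hb (mem_image_of_mem _ hp))

end PseudoMetricSpace

variable {E : Type*} [NormedAddCommGroup E] [InnerProductSpace ℝ E] {P s : Set E} {H : E → ℝ}

theorem uniformConvexOn_sq (hH : IsFarthestDist P H) (hs : Convex ℝ s) :
    UniformConvexOn s (fun r => r ^ 2) fun x => H x ^ 2 :=
  uniformConvexOn_of_isLUB hs (fun p _ => uniformConvexOn_dist_sq hs p) fun x _ => hH.isLUB_sq x

theorem sq_add_norm_sub_sq_le_sq (hH : IsFarthestDist P H) (hs : Convex ℝ s) {c x : E}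
    (hmin : IsMinOn H s c) (hc : c ∈ s) (hx : x ∈ s) : H c ^ 2 + ‖x - c‖ ^ 2 ≤ H x ^ 2 :=
  add_modulus_le_of_isMinOn (hH.uniformConvexOn_sq hs)
    (fun _ hy => pow_le_pow_left₀ (hH.nonneg c) (hmin hy) 2) hc hx

end IsFarthestDist

theorem stmt_13_general {E : Type*} [NormedAddCommGroup E] [InnerProductSpace ℝ E]
    {P s : Set E} {H : E → ℝ} (hH : IsFarthestDist P H) (hs : Convex ℝ s)
    {c x : E} (hmin : IsMinOn H s c) (hc : c ∈ s) (hx : x ∈ s)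
    {R : ℝ} (hR : 0 < R) (hxR : ‖x - c‖ ≤ R) :
    ‖x - c‖ ^ 2 / (2 * H c + R) ≤ H x - H c := by
  have hgap : 0 ≤ H x - H c := sub_nonneg.2 (hmin hx)
  have hsum : H x + H c ≤ 2 * H c + R := by
    linarith [hH.le_add_dist x c, dist_eq_norm x c]
  have hpos : 0 < 2 * H c + R := by linarith [hH.nonneg c]
  rw [div_le_iff₀ hpos]
  calc
    ‖x - c‖ ^ 2 ≤ H x ^ 2 - H c ^ 2 := by
      linarith [hH.sq_add_norm_sub_sq_le_sq hs hmin hc hx]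
    _ = (H x - H c) * (H x + H c) := by ring
    _ ≤ (H x - H c) * (2 * H c + R) := by gcongr

/-- Euclidean instance of the key lemma with the explicit constant `τ = 1/(2r* + R)`:
`H(x) − r* ≥ ‖x − c‖²/(2r* + R)` on the ball of radius `R` around the minimax center. -/
theorem stmt_13 {E : Type*} [NormedAddCommGroup E] [InnerProductSpace ℝ E]
    [FiniteDimensional ℝ E]
    (P : Finset E) (hP : P.Nonempty)
    (H : E → ℝ) (hH : ∀ x, H x = P.sup' hP fun p => ‖x - p‖)
    (c : E) (hc : ∀ y, H c ≤ H y) (R : ℝ) (hR : 0 < R) :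
    ∀ x : E, ‖x - c‖ ≤ R → H x - H c ≥ ‖x - c‖ ^ 2 / (2 * H c + R) := by
  obtain rfl : H = fun x => P.sup' hP (dist x) := by simpa only [dist_eq_norm] using funext hH
  exact fun x hxR => stmt_13_general (isFarthestDist_sup' hP) convex_univ (fun y _ => hc y)
    (mem_univ c) (mem_univ x) hR hxR
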